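/- Let K be a field of characteristic zero, G a finite group, and (V,σ) a finite-dimensional K[G]-module with a non-degenerate K-valued G-invariant symmetric bilinear form. Suppose (V,σ) is a filtered quadratic K[G]-space: there is an increasing filtration {F_i}_{i∈ℤ} of V by K[G]-submodules with F_{-N} = 0 and F_N = V for N sufficiently large, and with F_i^⊥ = F_{-i-1} for all i (where F_i^⊥ = {v : σ(v,x)=0 for all x ∈ F_i}). Let Gr_i = F_i/F_{i-1}. Then σ induces a non-degenerate G-invariant symmetric form on Gr_0 = F_0/F_{-1}, and there is a (non-canonical) isomorphism of K[G]-modules with forms: V ≅ (⊕_{i<0} Hyp(Gr_i)) ⊕ Gr_0. -/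

import Mathlib

/-- The subspace of vectors orthogonal to a submodule `W` with respect to a bilinear
form `σ`. -/
def orthTo {K V : Type*} [Field K] [AddCommGroup V] [Module K V]
    (σ : LinearMap.BilinForm K V) (W : Submodule K V) : Submodule K V where
  carrier := {v | ∀ w ∈ W, σ v w = 0}
  add_mem' := by
    intro a b ha hb w hw
    rw [map_add, LinearMap.add_apply, ha w hw, hb w hw, add_zero]
  zero_mem' := by intro w hw; simp
  smul_mem' := by
    intro c x hx w hw
    rw [map_smul, LinearMap.smul_apply, hx w hw, smul_zero]

/-- The `i`-th graded piece `Gr_i = F_i / F_{i-1}` of a filtration `F` by submodules. -/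
abbrev Gr {K V : Type*} [Field K] [AddCommGroup V] [Module K V]
    (F : ℤ → Submodule K V) (i : ℤ) : Type _ :=
  ↥(F i) ⧸ (F (i - 1)).comap (F i).subtype

/-- The `G`-action induced on the graded piece `Gr_i = F_i / F_{i-1}` of a `G`-stable
filtration. -/
def grAct {K V G : Type*} [Field K] [AddCommGroup V] [Module K V] [Group G]
    (ρ : Representation K G V) (F : ℤ → Submodule K V)
    (hstab : ∀ (g : G) (i : ℤ), ∀ x ∈ F i, ρ g x ∈ F i) (i : ℤ) (g : G) :
    Gr F i →ₗ[K] Gr F i :=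
  Submodule.mapQ _ _ ((ρ g).restrict (hstab g i))
    (by
      intro x hx
      simp only [Submodule.mem_comap, Submodule.subtype_apply,
        LinearMap.restrict_coe_apply] at hx ⊢
      exact hstab g (i - 1) _ hx)

/-!
Let `Q` be an equivariant projection onto the coisotropic submodule `W = F 0`, let `Q†` be its
`σ`-adjoint, and let `L = W^⊥ = F (-1)`. The corrected map `a = (1 - Q†) (1 + Q) / 2` takes values
in `L` and satisfies `σ (a x) y + σ x (a y) = σ x y - σ (Q x) (Q y)`, so
`x ↦ ((a x, σ x |_L), [Q x])` is an equivariant isometry `V ≃ Hyp L ⊕ W / L`. By semisimplicity `L`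
is isomorphic to the direct sum of the `Gr i` with `i < 0`, and `Hyp` turns direct sums into
orthogonal sums.
-/

section Forms

variable {R M M' : Type*} [CommRing R] [AddCommGroup M] [Module R M] [AddCommGroup M'] [Module R M']

/-- The hyperbolic form on `Hyp M = M ⊕ M^D`. -/
def hypForm (R M : Type*) [CommRing R] [AddCommGroup M] [Module R M] :
    LinearMap.BilinForm R (M × Module.Dual R M) :=
  (LinearMap.dualProd R M).comp (LinearEquiv.prodComm R M (Module.Dual R M)).toLinearMap
    (LinearEquiv.prodComm R M (Module.Dual R M)).toLinearMap

@[simp]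
theorem hypForm_apply (x y : M × Module.Dual R M) : hypForm R M x y = x.2 y.1 + y.2 x.1 :=
  add_comm _ _

/-- The orthogonal direct sum of two bilinear forms. -/
def prodForm (B : LinearMap.BilinForm R M) (B' : LinearMap.BilinForm R M') :
    LinearMap.BilinForm R (M × M') :=
  B.comp (.fst R M M') (.fst R M M') + B'.comp (.snd R M M') (.snd R M M')

@[simp]
theorem prodForm_apply (B : LinearMap.BilinForm R M) (B' : LinearMap.BilinForm R M')
    (x y : M × M') : prodForm B B' x y = B x.1 y.1 + B' x.2 y.2 :=
  rfl

/-- The orthogonal direct sum of a finite family of bilinear forms. -/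
def piForm {ι : Type*} [Fintype ι] {N : ι → Type*} [∀ i, AddCommGroup (N i)]
    [∀ i, Module R (N i)] (B : ∀ i, LinearMap.BilinForm R (N i)) :
    LinearMap.BilinForm R (∀ i, N i) :=
  ∑ i, (B i).comp (.proj i) (.proj i)

@[simp]
theorem piForm_apply {ι : Type*} [Fintype ι] {N : ι → Type*} [∀ i, AddCommGroup (N i)]
    [∀ i, Module R (N i)] (B : ∀ i, LinearMap.BilinForm R (N i)) (x y : ∀ i, N i) :
    piForm B x y = ∑ i, B i (x i) (y i) := by
  simp [piForm, LinearMap.sum_apply]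

end Forms

section Representations

variable {R G M : Type*} [CommRing R] [Group G] [AddCommGroup M] [Module R M]

/-- The representation on `Hyp M = M ⊕ M^D` induced by a representation on `M`. -/
noncomputable def hypRep (τ : Representation R G M) :
    Representation R G (M × Module.Dual R M) :=
  τ.prod τ.dual

/-- The direct sum of a finite family of representations, realised on the product so that its
elements are plain functions. -/
def piRep {ι : Type*} {N : ι → Type*} [∀ i, AddCommGroup (N i)] [∀ i, Module R (N i)]
    (τ : ∀ i, Representation R G (N i)) : Representation R G (∀ i, N i) where
  toFun g := LinearMap.piMap fun i => τ i g
  map_one' := by ext; simp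
  map_mul' g h := by ext; simp

/-- The representation on the subquotient `W / L` of two stable submodules `L ≤ W`, encoded as the
quotient of `W` by the preimage of `L`. -/
def subquotientRep (ρ : Representation R G M) (W L : Submodule R M)
    (hW : ∀ g, W ≤ W.comap (ρ g)) (hL : ∀ g, L ≤ L.comap (ρ g)) :
    Representation R G (W ⧸ L.comap W.subtype) :=
  (ρ.subrepresentation W hW).quotient (L.comap W.subtype) fun g _ hx => hL g hx

end Representations

/-- An isomorphism of representations carrying the form `σ` to the form `σ'`. -/
structure EquivariantIsometry {R G M M' : Type*} [CommRing R] [Group G] [AddCommGroup M]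
    [Module R M] [AddCommGroup M'] [Module R M'] (ρ : Representation R G M)
    (σ : LinearMap.BilinForm R M) (ρ' : Representation R G M') (σ' : LinearMap.BilinForm R M') where
  toEquiv : ρ.Equiv ρ'
  map_form : ∀ x y, σ' (toEquiv x) (toEquiv y) = σ x y

namespace EquivariantIsometry

variable {R G M M' M'' : Type*} [CommRing R] [Group G] [AddCommGroup M] [Module R M]
  [AddCommGroup M'] [Module R M'] [AddCommGroup M''] [Module R M'']
  {ρ : Representation R G M} {ρ' : Representation R G M'} {ρ'' : Representation R G M''}
  {σ : LinearMap.BilinForm R M} {σ' : LinearMap.BilinForm R M'} {σ'' : LinearMap.BilinForm R M''}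

/-- Composition of equivariant isometries. -/
def trans (e : EquivariantIsometry ρ σ ρ' σ') (e' : EquivariantIsometry ρ' σ' ρ'' σ'') :
    EquivariantIsometry ρ σ ρ'' σ'' where
  toEquiv := e.toEquiv.trans e'.toEquiv
  map_form x y := (e'.map_form _ _).trans (e.map_form x y)

/-- Adding a fixed orthogonal summand to an equivariant isometry. -/
noncomputable def prodRight (e : EquivariantIsometry ρ σ ρ' σ') (ρ'' : Representation R G M'')
    (σ'' : LinearMap.BilinForm R M'') :
    EquivariantIsometry (ρ.prod ρ'') (prodForm σ σ'') (ρ'.prod ρ'') (prodForm σ' σ'') where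
  toEquiv := .mk (e.toEquiv.toLinearEquiv.prodCongr (.refl R M'')) fun g =>
    LinearMap.ext fun x => Prod.ext (e.toEquiv.toIntertwiningMap.isIntertwining _ _ g x.1) rfl
  map_form x y := congrArg (· + σ'' x.2 y.2) (e.map_form x.1 y.1)

/-- Functoriality of the hyperbolic space: an isomorphism acts on the dual summand by the inverse
of its transpose. -/
noncomputable def hypCongr (φ : ρ.Equiv ρ') :
    EquivariantIsometry (hypRep ρ) (hypForm R M) (hypRep ρ') (hypForm R M') where
  toEquiv := .mk (φ.toLinearEquiv.prodCongr φ.symm.toLinearEquiv.dualMap) fun g =>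
    LinearMap.ext fun x => Prod.ext (φ.toIntertwiningMap.isIntertwining _ _ g x.1) <|
      LinearMap.ext fun y => congrArg x.2 (φ.symm.toIntertwiningMap.isIntertwining _ _ g⁻¹ y).symm
  map_form x y := by
    change hypForm R M' (φ x.1, x.2 ∘ₗ φ.symm.toLinearMap) (φ y.1, y.2 ∘ₗ φ.symm.toLinearMap) = _
    simp

/-- The hyperbolic space of a direct sum is the orthogonal sum of the hyperbolic spaces. -/
noncomputable def hypPi {ι : Type*} [Fintype ι] [DecidableEq ι] {N : ι → Type*}
    [∀ i, AddCommGroup (N i)] [∀ i, Module R (N i)] (τ : ∀ i, Representation R G (N i)) :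
    EquivariantIsometry (hypRep (piRep τ)) (hypForm R (∀ i, N i))
      (piRep fun i => hypRep (τ i)) (piForm fun i => hypForm R (N i)) where
  toEquiv := .mk
    { toFun := fun x i => (x.1 i, (LinearMap.lsum R N R).symm x.2 i)
      map_add' := fun _ _ => rfl
      map_smul' := fun _ _ => rfl
      invFun := fun x => (fun i => (x i).1, LinearMap.lsum R N R fun i => (x i).2)
      left_inv := fun x => Prod.ext rfl ((LinearMap.lsum R N R).apply_symm_apply x.2)
      right_inv := fun x => funext fun i => Prod.ext rfl <|
        congrFun ((LinearMap.lsum R N R).symm_apply_apply fun i => (x i).2) i } fun g =>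
    LinearMap.ext fun x => funext fun i => Prod.ext rfl <| LinearMap.ext fun y =>
      congrArg x.2 <| funext fun j =>
        Pi.apply_single (fun k => τ k g⁻¹) (fun k => map_zero (τ k g⁻¹)) i y j
  map_form x y := by
    have sum_single_eq (f : Module.Dual R (∀ i, N i)) (v : ∀ i, N i) :
        ∑ i, f (Pi.single i (v i)) = f v := by
      rw [← map_sum, LinearMap.sum_single_apply]
    rw [piForm_apply, hypForm_apply, ← sum_single_eq x.2, ← sum_single_eq y.2,
      ← Finset.sum_add_distrib]
    exact Finset.sum_congr rfl fun i _ => hypForm_apply _ _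

end EquivariantIsometry

theorem exists_isProj_intertwiningMap {K G V : Type*} [Field K] [Group G] [AddCommGroup V]
    [Module K V] (ρ : Representation K G V) [ρ.IsSemisimpleRepresentation] (W : Submodule K V)
    (hW : ∀ g, W ≤ W.comap (ρ g)) :
    ∃ Q : ρ.IntertwiningMap ρ, LinearMap.IsProj W Q.toLinearMap := by
  obtain ⟨⟨W', hW'⟩, hcompl⟩ := exists_isCompl (⟨W, fun g _ hx => hW g hx⟩ : Subrepresentation ρ)
  have h : IsCompl W W' :=
    ⟨disjoint_iff.mpr (congrArg Subrepresentation.toSubmodule hcompl.inf_eq_bot),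
      codisjoint_iff.mpr (congrArg Subrepresentation.toSubmodule hcompl.sup_eq_top)⟩
  refine ⟨⟨W.projection W' h, fun g => LinearMap.ext fun x => ?_⟩,
    Submodule.projection_apply_mem h, fun _ hx => Submodule.projection_apply_of_mem_left h hx⟩
  have hker : W.projection W' h (ρ g (x - W.projection W' h x)) = 0 :=
    Submodule.projection_apply_of_mem_right h (hW' g (Submodule.sub_projection_mem h x))
  rw [map_sub, map_sub, sub_eq_zero, Submodule.projection_apply_of_mem_left h
    (hW g (Submodule.projection_apply_mem h x))] at hker
  exact hker

theorem finrank_subquotient_add_finrank {K V : Type*} [Field K] [AddCommGroup V] [Module K V]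
    [FiniteDimensional K V] {L W : Submodule K V} (hLW : L ≤ W) :
    Module.finrank K (W ⧸ L.comap W.subtype) + Module.finrank K L = Module.finrank K W := by
  rw [← (Submodule.comapSubtypeEquivOfLe hLW).finrank_eq]
  exact Submodule.finrank_quotient_add_finrank _

section SubquotientForm

variable {R M : Type*} [CommRing R] [AddCommGroup M] [Module R M] {σ : LinearMap.BilinForm R M}

/-- The form induced on the subquotient `W / L` by a reflexive form `σ` with `L ≤ W^⊥`. -/
def subquotientForm (hσ : σ.IsRefl) (W L : Submodule R M) (hL : L ≤ σ.orthogonal W) :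
    LinearMap.BilinForm R (W ⧸ L.comap W.subtype) :=
  LinearMap.IsRefl.liftQ₂ (σ.restrict W) _ (fun x y => hσ (x : M) y) fun _ hx =>
    LinearMap.ext fun y => hσ _ _ (hL hx y y.2)

@[simp]
theorem subquotientForm_mk (hσ : σ.IsRefl) (W L : Submodule R M) (hL : L ≤ σ.orthogonal W)
    (x y : W) :
    subquotientForm hσ W L hL (Submodule.Quotient.mk x) (Submodule.Quotient.mk y) = σ x y :=
  rfl

theorem isSymm_subquotientForm (hσ : σ.IsSymm) (W L : Submodule R M) (hL : L ≤ σ.orthogonal W) :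
    (subquotientForm hσ.isRefl W L hL).IsSymm where
  eq := by
    rintro ⟨x⟩ ⟨y⟩
    exact hσ.eq x y

theorem nondegenerate_subquotientForm (hσ : σ.IsSymm) {W L : Submodule R M}
    (hL : σ.orthogonal W = L) : (subquotientForm hσ.isRefl W L hL.ge).Nondegenerate := by
  refine (isSymm_subquotientForm hσ W L hL.ge).isRefl.nondegenerate_iff_separatingLeft.mpr ?_
  rintro ⟨x⟩ hx
  refine (Submodule.Quotient.mk_eq_zero _).mpr ?_
  rw [Submodule.mem_comap, ← hL]
  exact fun y hy => hσ.isRefl _ _ (hx (Submodule.Quotient.mk ⟨y, hy⟩))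

theorem subquotientForm_subquotientRep {G : Type*} [Group G] (ρ : Representation R G M)
    (hinv : ∀ g x y, σ (ρ g x) (ρ g y) = σ x y) (hσ : σ.IsRefl) (W L : Submodule R M)
    (hW : ∀ g, W ≤ W.comap (ρ g)) (hL : ∀ g, L ≤ L.comap (ρ g)) (hLW : L ≤ σ.orthogonal W)
    (g : G) (a b : W ⧸ L.comap W.subtype) :
    subquotientForm hσ W L hLW (subquotientRep ρ W L hW hL g a) (subquotientRep ρ W L hW hL g b) =
      subquotientForm hσ W L hLW a b := by
  obtain ⟨x, rfl⟩ := Submodule.Quotient.mk_surjective _ a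
  obtain ⟨y, rfl⟩ := Submodule.Quotient.mk_surjective _ b
  exact hinv g x y

end SubquotientForm

section CoisotropicReduction

variable {K V : Type*} [Field K] [AddCommGroup V] [Module K V] [FiniteDimensional K V]
  {σ : LinearMap.BilinForm K V} {W L : Submodule K V}

/-- The map `a = (1 - Q†)(1 + Q) / 2`, where `Q†` is the `σ`-adjoint of `Q`. If `Q` is a projection
onto `W`, then `a` takes values in `W^⊥` and its symmetrisation `a + a†` is `1 - Q†Q`. -/
noncomputable def isotropicPart (hσ : σ.Nondegenerate) (Q : Module.End K V) : Module.End K V :=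
  (2⁻¹ : K) • ((1 - σ.leftAdjointOfNondegenerate hσ Q) * (1 + Q))

theorem apply_isotropicPart (hσ : σ.Nondegenerate) (Q : Module.End K V) (x y : V) :
    σ (isotropicPart hσ Q x) y = 2⁻¹ * σ (x + Q x) (y - Q y) := by
  have adj := σ.isAdjointPairLeftAdjointOfNondegenerate hσ Q (x + Q x) y
  rw [isotropicPart, LinearMap.smul_apply, map_smul, LinearMap.smul_apply, smul_eq_mul]
  change 2⁻¹ * σ (x + Q x - σ.leftAdjointOfNondegenerate hσ Q (x + Q x)) y = _
  rw [map_sub, LinearMap.sub_apply, adj, ← map_sub]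

theorem isotropicPart_mem_orthogonal (hσ : σ.Nondegenerate) (hsymm : σ.IsSymm) {Q : Module.End K V}
    (hQ : LinearMap.IsProj W Q) (x : V) : isotropicPart hσ Q x ∈ σ.orthogonal W := by
  refine fun w hw => hsymm.isRefl _ _ ?_
  rw [apply_isotropicPart, hQ.map_id w hw, sub_self, map_zero, mul_zero]

theorem isotropicPart_symmetrisation [NeZero (2 : K)] (hσ : σ.Nondegenerate) (hsymm : σ.IsSymm)
    (Q : Module.End K V) (x y : V) :
    σ (isotropicPart hσ Q x) y + σ x (isotropicPart hσ Q y) = σ x y - σ (Q x) (Q y) := by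
  have h2 : (2 : K) ≠ 0 := two_ne_zero
  rw [hsymm.eq x, apply_isotropicPart, apply_isotropicPart]
  simp only [map_add, map_sub, LinearMap.add_apply]
  rw [hsymm.eq y x, hsymm.eq (Q y) x, hsymm.eq y (Q x), hsymm.eq (Q y) (Q x)]
  field

variable {G : Type*} [Group G] {ρ : Representation K G V}

theorem isotropicPart_isIntertwining (hσ : σ.Nondegenerate)
    (hinv : ∀ g x y, σ (ρ g x) (ρ g y) = σ x y) (Q : ρ.IntertwiningMap ρ) (g : G) (x : V) :
    isotropicPart hσ Q.toLinearMap (ρ g x) = ρ g (isotropicPart hσ Q.toLinearMap x) := by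
  refine sub_eq_zero.mp (hσ.1 _ fun y => ?_)
  obtain ⟨z, rfl⟩ : ∃ z, ρ g z = y := ⟨ρ g⁻¹ y, ρ.self_inv_apply g y⟩
  rw [map_sub, LinearMap.sub_apply, hinv, apply_isotropicPart, apply_isotropicPart]
  simp only [Representation.IntertwiningMap.toLinearMap_apply, Q.isIntertwining, ← map_add,
    ← map_sub, hinv, sub_self]

/-- The map `V → Hyp(L) ⊕ W / L`, for `L = W^⊥`, attached to an equivariant projection `Q` onto
`W`: its components are the isotropic part, the pairing with `L`, and the class of `Q x`. -/
noncomputable def coisotropicSplitting (hσ : σ.Nondegenerate) (hsymm : σ.IsSymm)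
    (hinv : ∀ g x y, σ (ρ g x) (ρ g y) = σ x y) (hW : ∀ g, W ≤ W.comap (ρ g))
    (hL : ∀ g, L ≤ L.comap (ρ g)) (hWL : σ.orthogonal W = L) (Q : ρ.IntertwiningMap ρ)
    (hQ : LinearMap.IsProj W Q.toLinearMap) :
    ρ.IntertwiningMap ((hypRep (ρ.subrepresentation L hL)).prod (subquotientRep ρ W L hW hL)) where
  toLinearMap :=
    (((isotropicPart hσ Q.toLinearMap).codRestrict L fun x =>
      hWL.le (isotropicPart_mem_orthogonal hσ hsymm hQ x)).prod (σ.compl₂ L.subtype)).prod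
      ((L.comap W.subtype).mkQ ∘ₗ hQ.codRestrict)
  isIntertwining' g := LinearMap.ext fun x => by
    refine Prod.ext (Prod.ext (Subtype.ext ?_) (LinearMap.ext fun l => ?_))
      (congrArg (L.comap W.subtype).mkQ (Subtype.ext (Q.isIntertwining _ _ g x)))
    · exact isotropicPart_isIntertwining hσ hinv Q g x
    · change σ (ρ g x) l = σ x (ρ g⁻¹ l)
      rw [← hinv g x, ρ.self_inv_apply]

theorem exists_equivariantIsometry_hyp_prod_subquotient [NeZero (2 : K)]
    [ρ.IsSemisimpleRepresentation] (hσ : σ.Nondegenerate) (hsymm : σ.IsSymm)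
    (hinv : ∀ g x y, σ (ρ g x) (ρ g y) = σ x y) (hW : ∀ g, W ≤ W.comap (ρ g))
    (hL : ∀ g, L ≤ L.comap (ρ g)) (hWL : σ.orthogonal W = L) (hLW : L ≤ W) :
    Nonempty (EquivariantIsometry ρ σ
      ((hypRep (ρ.subrepresentation L hL)).prod (subquotientRep ρ W L hW hL))
      (prodForm (hypForm K L) (subquotientForm hsymm.isRefl W L hWL.ge))) := by
  obtain ⟨Q, hQ⟩ := exists_isProj_intertwiningMap ρ W hW
  let f := coisotropicSplitting hσ hsymm hinv hW hL hWL Q hQ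
  have map_form (x y : V) :
      prodForm (hypForm K L) (subquotientForm hsymm.isRefl W L hWL.ge) (f x) (f y) = σ x y := by
    change σ y (isotropicPart hσ Q.toLinearMap x) + σ x (isotropicPart hσ Q.toLinearMap y) +
      σ (Q x) (Q y) = σ x y
    rw [hsymm.eq y, isotropicPart_symmetrisation hσ hsymm]
    exact sub_add_cancel _ _
  have injective : Function.Injective f.toLinearMap :=
    (injective_iff_map_eq_zero f.toLinearMap).mpr fun x (hx : f x = 0) =>
      hσ.1 x fun y => by rw [← map_form, hx, map_zero, LinearMap.zero_apply]
  have finrank_eq : Module.finrank K V = Module.finrank K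
      ((L × Module.Dual K L) × (W ⧸ L.comap W.subtype)) := by
    have h := finrank_subquotient_add_finrank hLW
    have h' := LinearMap.BilinForm.finrank_orthogonal hσ W
    rw [hWL] at h'
    have h'' := Submodule.finrank_le W
    rw [Module.finrank_prod, Module.finrank_prod, Subspace.dual_finrank_eq]
    lia
  exact ⟨.mk (LinearEquiv.ofInjectiveOfFinrankEq f.toLinearMap injective finrank_eq)
    f.isIntertwining', map_form⟩

end CoisotropicReduction

section Filtration

variable {K V G : Type*} [Field K] [AddCommGroup V] [Module K V] [Group G]
  {F : ℤ → Submodule K V}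

theorem mem_of_forall_proj_mem {P : ℤ → Module.End K V} (hP : ∀ i, LinearMap.IsProj (F i) (P i))
    {x : V} (hx : x ∈ F (-1)) (n : ℕ) (h : ∀ j < n, P (-(j : ℤ) - 1) x ∈ F (-(j : ℤ) - 1 - 1)) :
    x ∈ F (-(n : ℤ) - 1) := by
  induction n with
  | zero => simpa using hx
  | succ n ih =>
    have hxn := h n n.lt_succ_self
    rw [(hP _).map_id x (ih fun j hj => h j (hj.trans n.lt_succ_self))] at hxn
    rwa [Nat.cast_succ, neg_add]

theorem sum_finrank_Gr_add_finrank [FiniteDimensional K V] (hmono : Monotone F) (n : ℕ) :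
    ∑ j : Fin n, Module.finrank K (Gr F (-(j : ℤ) - 1)) + Module.finrank K (F (-(n : ℤ) - 1)) =
      Module.finrank K (F (-1)) := by
  induction n with
  | zero => simp
  | succ n ih =>
    have hn : Module.finrank K (Gr F (-(n : ℤ) - 1)) + Module.finrank K (F (-(n : ℤ) - 1 - 1)) =
        Module.finrank K (F (-(n : ℤ) - 1)) :=
      finrank_subquotient_add_finrank (hmono (sub_one_lt _).le)
    rw [Fin.sum_univ_castSucc, Nat.cast_succ, neg_add, ← ih, ← hn, ← add_assoc]
    rfl

/-- The representation `grAct` on the graded piece `Gr_i`. -/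
def grRep (ρ : Representation K G V) (F : ℤ → Submodule K V)
    (hstab : ∀ (g : G) (i : ℤ), ∀ x ∈ F i, ρ g x ∈ F i) (i : ℤ) : Representation K G (Gr F i) :=
  subquotientRep ρ (F i) (F (i - 1)) (fun g => hstab g i) fun g => hstab g (i - 1)

theorem exists_equiv_piRep_grRep [FiniteDimensional K V] (ρ : Representation K G V)
    [ρ.IsSemisimpleRepresentation] (hmono : Monotone F)
    (hstab : ∀ (g : G) (i : ℤ), ∀ x ∈ F i, ρ g x ∈ F i) (n : ℕ) (hbot : F (-(n : ℤ)) = ⊥) :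
    Nonempty ((ρ.subrepresentation (F (-1)) fun g => hstab g (-1)).Equiv
      (piRep fun j : Fin n => grRep ρ F hstab (-(j : ℤ) - 1))) := by
  choose P hP using fun i => exists_isProj_intertwiningMap ρ (F i) fun g => hstab g i
  let f : F (-1) →ₗ[K] ∀ j : Fin n, Gr F (-(j : ℤ) - 1) :=
    LinearMap.pi fun j => Submodule.mkQ _ ∘ₗ (hP (-(j : ℤ) - 1)).codRestrict ∘ₗ (F (-1)).subtype
  have hbot' : F (-(n : ℤ) - 1) = ⊥ := le_bot_iff.mp (hbot ▸ hmono (sub_one_lt _).le)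
  have injective : Function.Injective f := by
    refine (injective_iff_map_eq_zero f).mpr fun x hx => Subtype.ext ?_
    have hxn := mem_of_forall_proj_mem hP x.2 n fun j hj =>
      (Submodule.Quotient.mk_eq_zero
        ((F (-(j : ℤ) - 1 - 1)).comap (F (-(j : ℤ) - 1)).subtype)).mp (congrFun hx ⟨j, hj⟩)
    rwa [hbot', Submodule.mem_bot] at hxn
  have finrank_eq : Module.finrank K (F (-1)) =
      Module.finrank K (∀ j : Fin n, Gr F (-(j : ℤ) - 1)) := by
    rw [Module.finrank_pi_fintype, ← sum_finrank_Gr_add_finrank hmono n, hbot', finrank_bot,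
      add_zero]
  exact ⟨.mk (LinearEquiv.ofInjectiveOfFinrankEq f injective finrank_eq) fun g =>
    LinearMap.ext fun x => funext fun j =>
      congrArg Submodule.Quotient.mk (Subtype.ext ((P (-(j : ℤ) - 1)).isIntertwining _ _ g x))⟩

theorem orthTo_eq_orthogonal {σ : LinearMap.BilinForm K V} (hσ : σ.IsRefl) (W : Submodule K V) :
    orthTo σ W = σ.orthogonal W :=
  Submodule.ext fun _ => forall₂_congr fun _ _ => hσ.eq_iff

theorem exists_equivariantIsometry_piRep_hypRep_prod_grRep [NeZero (2 : K)]
    [FiniteDimensional K V] (ρ : Representation K G V) [ρ.IsSemisimpleRepresentation]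
    {σ : LinearMap.BilinForm K V} (hσ : σ.Nondegenerate) (hsymm : σ.IsSymm)
    (hinv : ∀ g x y, σ (ρ g x) (ρ g y) = σ x y) (hmono : Monotone F)
    (hstab : ∀ (g : G) (i : ℤ), ∀ x ∈ F i, ρ g x ∈ F i) (n : ℕ) (hbot : F (-(n : ℤ)) = ⊥)
    (horth : σ.orthogonal (F 0) = F (0 - 1)) :
    Nonempty (EquivariantIsometry ρ σ
      ((piRep fun j : Fin n => hypRep (grRep ρ F hstab (-(j : ℤ) - 1))).prod (grRep ρ F hstab 0))
      (prodForm (piForm fun j : Fin n => hypForm K (Gr F (-(j : ℤ) - 1)))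
        (subquotientForm hsymm.isRefl (F 0) (F (0 - 1)) horth.ge))) := by
  obtain ⟨e⟩ := exists_equivariantIsometry_hyp_prod_subquotient hσ hsymm hinv
    (fun g => hstab g 0) (fun g => hstab g (0 - 1)) horth (hmono (by decide))
  obtain ⟨φ⟩ := exists_equiv_piRep_grRep ρ hmono hstab n hbot
  exact ⟨e.trans <| ((EquivariantIsometry.hypCongr φ).trans
    (.hypPi fun j : Fin n => grRep ρ F hstab (-(j : ℤ) - 1))).prodRight _ _⟩

theorem filtered_quadratic_decomposition_general [NeZero (2 : K)] [FiniteDimensional K V]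
    (ρ : Representation K G V) [ρ.IsSemisimpleRepresentation] (σ : LinearMap.BilinForm K V)
    (hσsymm : ∀ x y, σ x y = σ y x) (hσnd : LinearMap.BilinForm.Nondegenerate σ)
    (hσinv : ∀ (g : G) (x y : V), σ (ρ g x) (ρ g y) = σ x y)
    (F : ℤ → Submodule K V) (hmono : Monotone F)
    (hstab : ∀ (g : G) (i : ℤ), ∀ x ∈ F i, ρ g x ∈ F i)
    (n : ℕ) (hbot : F (-(n : ℤ)) = ⊥) (horth : orthTo σ (F 0) = F (-1)) :
    ∃ σ0 : LinearMap.BilinForm K (Gr F 0),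
      (∀ x y : ↥(F 0),
        σ0 (Submodule.Quotient.mk x) (Submodule.Quotient.mk y) = σ ↑x ↑y) ∧
      (∀ a b, σ0 a b = σ0 b a) ∧
      LinearMap.BilinForm.Nondegenerate σ0 ∧
      (∀ (g : G) (a b : Gr F 0),
        σ0 (grAct ρ F hstab 0 g a) (grAct ρ F hstab 0 g b) = σ0 a b) ∧
      ∃ e : V ≃ₗ[K]
          ((j : Fin n) → (Gr F (-(j : ℤ) - 1) × Module.Dual K (Gr F (-(j : ℤ) - 1))))
            × Gr F 0,
        (∀ x y : V,
          σ x y =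
            (∑ j : Fin n,
              (((e x).1 j).2 ((e y).1 j).1 + ((e y).1 j).2 ((e x).1 j).1))
              + σ0 (e x).2 (e y).2) ∧
        (∀ (g : G) (x : V),
          e (ρ g x) =
            (fun (j : Fin n) =>
              (grAct ρ F hstab (-(j : ℤ) - 1) g ((e x).1 j).1,
               ((e x).1 j).2 ∘ₗ grAct ρ F hstab (-(j : ℤ) - 1) g⁻¹),
             grAct ρ F hstab 0 g (e x).2)) := by
  have hsymm : σ.IsSymm := ⟨hσsymm⟩
  have hF : σ.orthogonal (F 0) = F (0 - 1) := (orthTo_eq_orthogonal hsymm.isRefl _).symm.trans horth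
  obtain ⟨e⟩ := exists_equivariantIsometry_piRep_hypRep_prod_grRep ρ hσnd hsymm hσinv hmono hstab n
    hbot hF
  refine ⟨subquotientForm hsymm.isRefl (F 0) (F (0 - 1)) hF.ge, subquotientForm_mk _ _ _ _,
    (isSymm_subquotientForm hsymm _ _ _).eq, nondegenerate_subquotientForm hsymm hF,
    subquotientForm_subquotientRep ρ hσinv hsymm.isRefl _ _ (fun g => hstab g 0)
      (fun g => hstab g (0 - 1)) hF.ge, e.toEquiv.toLinearEquiv, fun x y => ?_,
    e.toEquiv.toIntertwiningMap.isIntertwining _ _⟩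
  rw [← e.map_form, prodForm_apply, piForm_apply]
  simp only [hypForm_apply]
  rfl

end Filtration

/-- For a filtered quadratic `K[G]`-space `(V, σ)` with filtration `{F i}` satisfying
`F i ^⊥ = F (-i-1)`, the form `σ` induces a non-degenerate `G`-invariant symmetric form
on `Gr 0 = F 0 / F (-1)`, and there is a (non-canonical) `G`-equivariant isometry
`V ≅ (⊕_{i<0} Hyp (Gr i)) ⊕ Gr 0`, where `Hyp (Gr i) = Gr i ⊕ (Gr i)^D` carries the
hyperbolic form. -/
theorem filtered_quadratic_decomposition {K V G : Type*} [Field K] [CharZero K]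
    [AddCommGroup V] [Module K V] [FiniteDimensional K V] [Group G] [Finite G]
    (ρ : Representation K G V) (σ : LinearMap.BilinForm K V)
    (hσsymm : ∀ x y, σ x y = σ y x)
    (hσnd : LinearMap.BilinForm.Nondegenerate σ)
    (hσinv : ∀ (g : G) (x y : V), σ (ρ g x) (ρ g y) = σ x y)
    (F : ℤ → Submodule K V) (hmono : Monotone F)
    (hstab : ∀ (g : G) (i : ℤ), ∀ x ∈ F i, ρ g x ∈ F i)
    (Nn : ℕ) (hbot : F (-(Nn : ℤ)) = ⊥) (htop : F (Nn : ℤ) = ⊤)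
    (horth : ∀ i : ℤ, orthTo σ (F i) = F (-i - 1)) :
    ∃ σ0 : LinearMap.BilinForm K (Gr F 0),
      (∀ x y : ↥(F 0),
        σ0 (Submodule.Quotient.mk x) (Submodule.Quotient.mk y) = σ ↑x ↑y) ∧
      (∀ a b, σ0 a b = σ0 b a) ∧
      LinearMap.BilinForm.Nondegenerate σ0 ∧
      (∀ (g : G) (a b : Gr F 0),
        σ0 (grAct ρ F hstab 0 g a) (grAct ρ F hstab 0 g b) = σ0 a b) ∧
      ∃ e : V ≃ₗ[K]
          ((j : Fin Nn) → (Gr F (-(j : ℤ) - 1) × Module.Dual K (Gr F (-(j : ℤ) - 1))))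
            × Gr F 0,
        (∀ x y : V,
          σ x y =
            (∑ j : Fin Nn,
              (((e x).1 j).2 ((e y).1 j).1 + ((e y).1 j).2 ((e x).1 j).1))
              + σ0 (e x).2 (e y).2) ∧
        (∀ (g : G) (x : V),
          e (ρ g x) =
            (fun (j : Fin Nn) =>
              (grAct ρ F hstab (-(j : ℤ) - 1) g ((e x).1 j).1,
               ((e x).1 j).2 ∘ₗ grAct ρ F hstab (-(j : ℤ) - 1) g⁻¹),
             grAct ρ F hstab 0 g (e x).2)) := by
  have : NeZero (Nat.card G : K) := ⟨Nat.cast_ne_zero.mpr Nat.card_pos.ne'⟩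
  exact filtered_quadratic_decomposition_general ρ σ hσsymm hσnd hσinv F hmono hstab Nn hbot
    (by simpa using horth 0)
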